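/- arXiv:1506.02913 — 4 statements merged into one kernel-verified Lean document; each statement's English description precedes it below -/
import Mathlib

section
/- (Ehrenfeucht's compactness property, consequence.) For every n and every alphabet A, there is no infinite decreasing chain of word equations in n variables with solutions taken in the free monoid on A; that is, there is no sequence E_1, E_2, … of equations over n variables such that for every i ≥ 0 there is a morphism into the free monoid on A that is a solution of each of E_1, …, E_i but not a solution of E_{i+1}. -/
/-- A monoid morphism `h` from the free monoid on the variables `Ξ` to a monoid `M`
is a solution of the equation `E = (U, V)` if `h U = h V`. -/
def IsSolution {Ξ M : Type*} [Monoid M] (h : FreeMonoid Ξ →* M)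
    (E : FreeMonoid Ξ × FreeMonoid Ξ) : Prop :=
  h E.1 = h E.2

/-- The matrix representation of the free monoid over a commutative ring. -/
noncomputable def wordMat (A : Type*) :
    FreeMonoid A →* Matrix (Fin 2) (Fin 2) (Polynomial (MvPolynomial A ℤ)) :=
  FreeMonoid.lift fun a => !![Polynomial.X, Polynomial.C (MvPolynomial.X a); 0, 1]

theorem wordMat_row (A : Type*) (w : FreeMonoid A) :
    wordMat A w 1 0 = 0 ∧ wordMat A w 1 1 = 1 := by
  induction w using FreeMonoid.recOn with
  | one => simp
  | of_mul a w ih =>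
    rw [map_mul]
    simp [Matrix.mul_apply, Fin.sum_univ_two, wordMat]
    simpa [wordMat] using ih

theorem wordMat_cons (A : Type*) (a : A) (w : FreeMonoid A) :
    wordMat A (FreeMonoid.of a * w) 0 1 =
      Polynomial.X * wordMat A w 0 1 + Polynomial.C (MvPolynomial.X a) := by
  rw [map_mul, Matrix.mul_apply, Fin.sum_univ_two, (wordMat_row A w).2]
  simp [wordMat]

theorem wordMat_inj (A : Type*) (w v : FreeMonoid A)
    (h : wordMat A w 0 1 = wordMat A v 0 1) : w = v := by
  induction w using FreeMonoid.recOn generalizing v with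
  | one =>
    cases v using FreeMonoid.casesOn with
    | one => rfl
    | of_mul a v =>
      rw [wordMat_cons] at h
      have := congrArg (fun p => Polynomial.coeff p 0) h
      simp at this
      exact absurd this.symm (MvPolynomial.X_ne_zero a)
  | of_mul b w ih =>
    cases v using FreeMonoid.casesOn with
    | one =>
      rw [wordMat_cons] at h
      have := congrArg (fun p => Polynomial.coeff p 0) h
      simp at this
    | of_mul a v =>
      rw [wordMat_cons, wordMat_cons] at h
      have h0 := congrArg (fun p => Polynomial.coeff p 0) h
      simp at h0
      have hab : b = a := h0
      subst hab
      have h1 := mul_left_cancel₀ Polynomial.X_ne_zero (add_right_cancel h)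
      rw [ih v h1]

/-- The generic matrix representation. -/
noncomputable def genMat (n : ℕ) : FreeMonoid (Fin n) →*
    Matrix (Fin 2) (Fin 2) (MvPolynomial (Fin n × Fin 2 × Fin 2) ℤ) :=
  FreeMonoid.lift fun i => Matrix.of fun a b => MvPolynomial.X (i, a, b)

/-- Specialization of the generic matrices at a morphism. -/
noncomputable def specHom {n : ℕ} {A : Type*} (h : FreeMonoid (Fin n) →* FreeMonoid A) :
    MvPolynomial (Fin n × Fin 2 × Fin 2) ℤ →+* Polynomial (MvPolynomial A ℤ) :=
  MvPolynomial.eval₂Hom (Int.castRingHom _)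
    fun p => wordMat A (h (FreeMonoid.of p.1)) p.2.1 p.2.2

theorem specHom_genMat {n : ℕ} {A : Type*} (h : FreeMonoid (Fin n) →* FreeMonoid A)
    (w : FreeMonoid (Fin n)) (a b : Fin 2) :
    specHom h (genMat n w a b) = wordMat A (h w) a b := by
  have : ((specHom h).mapMatrix.toMonoidHom).comp (genMat n) = (wordMat A).comp h := by
    apply FreeMonoid.hom_eq
    intro i
    ext1 a b
    simp [genMat, specHom]
  have h2 := congrFun (congrFun (DFunLike.congr_fun this w) a) b
  simpa using h2

theorem no_infinite_decreasing_chain_of_word_equations (n : ℕ) (A : Type*) :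
    ¬ ∃ E : ℕ → FreeMonoid (Fin n) × FreeMonoid (Fin n),
      ∀ i : ℕ, ∃ h : FreeMonoid (Fin n) →* FreeMonoid A,
        (∀ j < i, IsSolution h (E j)) ∧ ¬ IsSolution h (E i) := by
  rintro ⟨E, hE⟩
  let d : ℕ → MvPolynomial (Fin n × Fin 2 × Fin 2) ℤ :=
    fun j => genMat n (E j).1 0 1 - genMat n (E j).2 0 1
  have key : ∀ (h : FreeMonoid (Fin n) →* FreeMonoid A) j,
      IsSolution h (E j) ↔ specHom h (d j) = 0 := by
    intro h j
    simp only [d, map_sub, specHom_genMat, sub_eq_zero, IsSolution]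
    exact ⟨fun e => by rw [e], wordMat_inj A _ _⟩
  let I : ℕ →o Ideal (MvPolynomial (Fin n × Fin 2 × Fin 2) ℤ) :=
    ⟨fun i => Ideal.span (Set.image d (Set.Iio i)), fun i j hij =>
      Ideal.span_mono (Set.image_mono (Set.Iio_subset_Iio hij))⟩
  obtain ⟨N, hN⟩ := monotone_stabilizes_iff_noetherian.mpr
    (inferInstance : IsNoetherianRing (MvPolynomial (Fin n × Fin 2 × Fin 2) ℤ)) I
  obtain ⟨h, h1, h2⟩ := hE N
  have hle : I N ≤ RingHom.ker (specHom h) := by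
    refine Ideal.span_le.mpr ?_
    rintro _ ⟨j, hj, rfl⟩
    exact (key h j).1 (h1 j hj)
  have hmem : d N ∈ I (N + 1) := Ideal.subset_span ⟨N, Nat.lt_succ_self N, rfl⟩
  rw [← hN (N + 1) (Nat.le_succ N)] at hmem
  exact h2 ((key h N).2 (hle hmem))
end

section
/- There is a decreasing chain of 7 word equations in 3 variables with solutions taken in the free monoid on two letters; explicitly, with variables x, y, z, the sequence xyz = zxy; xyxzyz = zxzyxy; xz = zx; xy = yx; x = 1; y = 1; z = 1 is a decreasing chain. Hence dc(3) ≥ 7 for free monoids. -/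
/-- The variable `x`. -/
def x : FreeMonoid (Fin 3) := FreeMonoid.of 0
/-- The variable `y`. -/
def y : FreeMonoid (Fin 3) := FreeMonoid.of 1
/-- The variable `z`. -/
def z : FreeMonoid (Fin 3) := FreeMonoid.of 2

/-- The sequence of equations
`xyz = zxy; xyxzyz = zxzyxy; xz = zx; xy = yx; x = 1; y = 1; z = 1`. -/
def chain3 : Fin 7 → FreeMonoid (Fin 3) × FreeMonoid (Fin 3) :=
  ![(x * y * z, z * x * y),
    (x * y * x * z * y * z, z * x * z * y * x * y),
    (x * z, z * x),
    (x * y, y * x),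
    (x, 1),
    (y, 1),
    (z, 1)]

/-- The above sequence of 7 word equations in 3 variables is a decreasing chain,
with solutions taken in the free monoid on two letters. Hence dc(3) ≥ 7. -/
theorem chain3_is_decreasing_chain :
    ∀ i : Fin 7, ∃ h : FreeMonoid (Fin 3) →* FreeMonoid (Fin 2),
      (∀ j : Fin 7, j < i → IsSolution h (chain3 j)) ∧ ¬ IsSolution h (chain3 i) := by
  intro i
  -- images of (x, y, z) witnessing each strict step of the chain
  let w : Fin 7 → Fin 3 → List (Fin 2) :=
    ![![[0], [], [1]],
      ![[0], [1], [0, 1, 0, 1]],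
      ![[0], [1], [0, 1]],
      ![[0], [1], []],
      ![[0], [], []],
      ![[], [0], []],
      ![[], [], [0]]]
  refine ⟨FreeMonoid.lift (fun v => FreeMonoid.ofList (w i v)), ?_, ?_⟩
  · intro j hj
    fin_cases i <;> fin_cases j <;>
      first
      | exact absurd hj (by decide)
      | (simp only [IsSolution]; rfl)
  · fin_cases i <;>
      · intro h
        have h' := congrArg FreeMonoid.toList h
        simp [chain3, x, y, z, w, FreeMonoid.toList_mul] at h'
end

section
/- For every m ≥ 3 and n = 4m, there is an independent system of m²(m−1)(m−2)/6 word equations in n variables, with solutions taken in the free monoid on two letters, having a nonperiodic solution. Explicitly, with variables x_i, y_i, z_i, t_i for 1 ≤ i ≤ m, the system consisting of the equations E(i,j,k,l): x_i x_j x_k y_i y_j y_k z_i z_j z_k t_l = t_l x_i x_j x_k y_i y_j y_k z_i z_j z_k, for i < j < k and l ∈ {1, …, m}, is independent and has a nonperiodic solution. Hence is'(4m) ≥ m²(m−1)(m−2)/6. -/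
/-- A solution is periodic if the images of all variables are powers of a common word. -/
def IsPeriodic {Ξ A : Type*} (h : FreeMonoid Ξ →* FreeMonoid A) : Prop :=
  ∃ t : FreeMonoid A, ∀ v : Ξ, ∃ k : ℕ, h (FreeMonoid.of v) = t ^ k

/-- The variable `x_i` (the variables are the `4 * m` pairs in `Fin 4 × Fin m`). -/
def xv {m : ℕ} (i : Fin m) : FreeMonoid (Fin 4 × Fin m) := FreeMonoid.of (0, i)
/-- The variable `y_i`. -/
def yv {m : ℕ} (i : Fin m) : FreeMonoid (Fin 4 × Fin m) := FreeMonoid.of (1, i)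
/-- The variable `z_i`. -/
def zv {m : ℕ} (i : Fin m) : FreeMonoid (Fin 4 × Fin m) := FreeMonoid.of (2, i)
/-- The variable `t_i`. -/
def tv {m : ℕ} (i : Fin m) : FreeMonoid (Fin 4 × Fin m) := FreeMonoid.of (3, i)

/-- The equation `E(i,j,k,l) :
x_i x_j x_k y_i y_j y_k z_i z_j z_k t_l = t_l x_i x_j x_k y_i y_j y_k z_i z_j z_k`. -/
def eqn {m : ℕ} (i j k l : Fin m) :
    FreeMonoid (Fin 4 × Fin m) × FreeMonoid (Fin 4 × Fin m) :=
  (xv i * xv j * xv k * yv i * yv j * yv k * zv i * zv j * zv k * tv l,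
   tv l * (xv i * xv j * xv k * yv i * yv j * yv k * zv i * zv j * zv k))

/-- The system consisting of the equations `E(i,j,k,l)` for `i < j < k` and arbitrary `l`. -/
def system (m : ℕ) : Set (FreeMonoid (Fin 4 × Fin m) × FreeMonoid (Fin 4 × Fin m)) :=
  {e | ∃ i j k l : Fin m, i < j ∧ j < k ∧ e = eqn i j k l}

/-- The words used for the three distinguished indices (`3` stands for the other indices). -/
def wd : Fin 3 → Fin 4 → List (Fin 2)
  | 0, 2 => [0, 1]
  | 1, 0 => [0, 1]
  | 1, 1 => [0, 1, 0]
  | 1, 2 => [0]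
  | 2, 0 => [0, 1, 0]
  | 2, 1 => [1, 0]
  | 2, 2 => [1, 0]
  | _, _ => []

/-- The product word. -/
def pw (p q r : Fin 4) : List (Fin 2) :=
  wd 0 p ++ wd 0 q ++ wd 0 r ++ wd 1 p ++ wd 1 q ++ wd 1 r ++ wd 2 p ++ wd 2 q ++ wd 2 r

/-- The word for the distinguished `t`. -/
def tw : List (Fin 2) := [0, 1, 0, 1, 0]

theorem pw_comm : ∀ p q r : Fin 4, (p ≠ 3 → q ≠ 3 → p < q) → (q ≠ 3 → r ≠ 3 → q < r) →
    (p ≠ 3 → r ≠ 3 → p < r) → ¬ (p = 0 ∧ q = 1 ∧ r = 2) →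
    pw p q r ++ tw = tw ++ pw p q r := by
  decide

theorem pw_not_comm : ¬ (pw 0 1 2 ++ tw = tw ++ pw 0 1 2) := by decide

/-- The class of an index. -/
def cl {m : ℕ} (a b c i : Fin m) : Fin 4 :=
  if i = a then 0 else if i = b then 1 else if i = c then 2 else 3

/-- Images of the variables. -/
def img {m : ℕ} (a b c d : Fin m) (v : Fin 4 × Fin m) : FreeMonoid (Fin 2) :=
  if v.1 = 3 then (if v.2 = d then FreeMonoid.ofList tw else 1)
  else if v.1 = 0 then FreeMonoid.ofList (wd 0 (cl a b c v.2))
  else if v.1 = 1 then FreeMonoid.ofList (wd 1 (cl a b c v.2))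
  else FreeMonoid.ofList (wd 2 (cl a b c v.2))

theorem sol_iff {m : ℕ} (a b c d i j k l : Fin m) :
    IsSolution (FreeMonoid.lift (img a b c d)) (eqn i j k l) ↔
      (l = d → pw (cl a b c i) (cl a b c j) (cl a b c k) ++ tw =
        tw ++ pw (cl a b c i) (cl a b c j) (cl a b c k)) := by
  have hl : IsSolution (FreeMonoid.lift (img a b c d)) (eqn i j k l) ↔
      FreeMonoid.ofList (pw (cl a b c i) (cl a b c j) (cl a b c k)) * img a b c d (3, l) =
      img a b c d (3, l) * FreeMonoid.ofList (pw (cl a b c i) (cl a b c j) (cl a b c k)) := by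
    simp [IsSolution, eqn, xv, yv, zv, tv, pw, img, FreeMonoid.ofList_append, mul_assoc]
  rw [hl]
  by_cases h : l = d
  · simp only [img, h, if_true, forall_true_left, ← FreeMonoid.ofList_append]
    exact FreeMonoid.ofList.injective.eq_iff
  · simp [img, h]

theorem cl_lt {m : ℕ} {a b c i j : Fin m} (hab : a < b) (hbc : b < c) (hij : i < j) :
    cl a b c i ≠ 3 → cl a b c j ≠ 3 → cl a b c i < cl a b c j := by
  unfold cl
  split_ifs <;> subst_vars <;> simp <;> omega

theorem eqn_inj {m : ℕ} {i j k l i' j' k' l' : Fin m} (h : eqn i j k l = eqn i' j' k' l') :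
    i = i' ∧ j = j' ∧ k = k' ∧ l = l' := by
  have h1 := congrArg (fun e => FreeMonoid.toList e.1) h
  simp [eqn, xv, yv, zv, tv, FreeMonoid.toList_mul, FreeMonoid.toList_of] at h1
  tauto

theorem card_triples (m : ℕ) :
    (Finset.univ.filter fun p : Fin m × Fin m × Fin m => p.1 < p.2.1 ∧ p.2.1 < p.2.2).card
      = m.choose 3 := by
  have h3 : (Finset.powersetCard 3 (Finset.univ : Finset (Fin m))).card = m.choose 3 := by simp
  rw [← h3]
  refine Finset.card_bij (fun p _ => {p.1, p.2.1, p.2.2}) ?_ ?_ ?_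
  · rintro ⟨i, j, k⟩ h
    simp only [Finset.mem_filter, Finset.mem_univ, true_and] at h
    simp only [Finset.mem_powersetCard, Finset.subset_univ, true_and]
    exact Finset.card_eq_three.2 ⟨i, j, k, h.1.ne, (h.1.trans h.2).ne, h.2.ne, rfl⟩
  · rintro ⟨i, j, k⟩ h ⟨i', j', k'⟩ h' he
    simp only [Finset.mem_filter, Finset.mem_univ, true_and] at h h'
    have e := fun x => Finset.ext_iff.1 he x
    simp only [Finset.mem_insert, Finset.mem_singleton] at e
    have e1 := (e i).1 (by simp)
    have e2 := (e j).1 (by simp)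
    have e3 := (e k).1 (by simp)
    have e4 := (e i').2 (by simp)
    simp only [Prod.mk.injEq]
    omega
  · intro s hs
    have hc := (Finset.mem_powersetCard.1 hs).2
    let o := s.orderEmbOfFin hc
    refine ⟨(o 0, o 1, o 2), ?_, ?_⟩
    · simp
    · have := Finset.image_orderEmbOfFin_univ s hc
      ext x
      rw [Finset.ext_iff] at this
      rw [← this x]
      simp only [Finset.mem_image, Finset.mem_univ, true_and, Finset.mem_insert,
        Finset.mem_singleton, o]
      constructor
      · rintro (h | h | h)
        · exact ⟨0, h.symm⟩
        · exact ⟨1, h.symm⟩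
        · exact ⟨2, h.symm⟩
      · rintro ⟨r, h⟩
        fin_cases r
        · exact Or.inl h.symm
        · exact Or.inr (Or.inl h.symm)
        · exact Or.inr (Or.inr h.symm)

theorem card_system (m : ℕ) : (system m).ncard = m.choose 3 * m := by
  have : system m = (fun q : (Fin m × Fin m × Fin m) × Fin m => eqn q.1.1 q.1.2.1 q.1.2.2 q.2) ''
      (((Finset.univ.filter fun p : Fin m × Fin m × Fin m => p.1 < p.2.1 ∧ p.2.1 < p.2.2) ×ˢ
        (Finset.univ : Finset (Fin m)) : Finset _) : Set _) := by
    ext e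
    simp only [system, Set.mem_setOf_eq, Set.mem_image, Finset.mem_coe, Finset.mem_product,
      Finset.mem_filter, Finset.mem_univ, true_and, and_true]
    constructor
    · rintro ⟨i, j, k, l, h1, h2, rfl⟩
      exact ⟨((i, j, k), l), ⟨h1, h2⟩, rfl⟩
    · rintro ⟨⟨⟨i, j, k⟩, l⟩, ⟨h1, h2⟩, rfl⟩
      exact ⟨i, j, k, l, h1, h2, rfl⟩
  rw [this, Set.ncard_image_of_injective, Set.ncard_coe_finset, Finset.card_product,
    card_triples, Finset.card_univ, Fintype.card_fin]
  rintro ⟨⟨i, j, k⟩, l⟩ ⟨⟨i', j', k'⟩, l'⟩ h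
  obtain ⟨rfl, rfl, rfl, rfl⟩ := eqn_inj h
  rfl

/-- A nonperiodic assignment. -/
def npimg {m : ℕ} (v : Fin 4 × Fin m) : FreeMonoid (Fin 2) :=
  if v.1 = 3 then (if v.2.val = 0 then FreeMonoid.of 0 else FreeMonoid.of 1) else 1

/-- For every `m ≥ 3`, the above system of word equations in `n = 4m` variables consists of
`m²(m-1)(m-2)/6` equations, is independent (with solutions taken in the free monoid on two
letters), and has a nonperiodic solution. Hence is'(4m) ≥ m²(m−1)(m−2)/6. -/
theorem system_card_independent_nonperiodic (m : ℕ) (hm : 3 ≤ m) :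
    (system m).ncard = m ^ 2 * (m - 1) * (m - 2) / 6 ∧
    (∀ e ∈ system m, ∃ h : FreeMonoid (Fin 4 × Fin m) →* FreeMonoid (Fin 2),
      (∀ e' ∈ system m, e' ≠ e → IsSolution h e') ∧ ¬ IsSolution h e) ∧
    (∃ h : FreeMonoid (Fin 4 × Fin m) →* FreeMonoid (Fin 2),
      (∀ e ∈ system m, IsSolution h e) ∧ ¬ IsPeriodic h) := by
  refine ⟨?_, ?_, ?_⟩
  · rw [card_system]
    obtain ⟨n, rfl⟩ : ∃ n, m = n + 2 := ⟨m - 2, by omega⟩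
    have h := Nat.descFactorial_eq_factorial_mul_choose (n + 2) 3
    have h2 : (n + 2).descFactorial 3 = (n + 2) * (n + 1) * n := by
      simp [Nat.descFactorial]
      ring
    have h3 : Nat.factorial 3 = 6 := rfl
    rw [h2, h3] at h
    symm
    apply Nat.div_eq_of_eq_mul_right (by norm_num)
    have e1 : n + 2 - 1 = n + 1 := by omega
    have e2 : n + 2 - 2 = n := by omega
    rw [e1, e2]
    calc (n + 2) ^ 2 * (n + 1) * n = (n + 2) * ((n + 2) * (n + 1) * n) := by ring
      _ = _ := by rw [h]; ring
  · rintro e ⟨a, b, c, d, hab, hbc, rfl⟩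
    refine ⟨FreeMonoid.lift (img a b c d), ?_, ?_⟩
    · rintro e' ⟨i, j, k, l, hij, hjk, rfl⟩ hne
      rw [sol_iff]
      rintro rfl
      apply pw_comm _ _ _ (cl_lt hab hbc hij) (cl_lt hab hbc hjk) (cl_lt hab hbc (hij.trans hjk))
      rintro ⟨h0, h1, h2⟩
      apply hne
      have g0 : i = a := by
        revert h0; unfold cl; split_ifs <;> simp_all
      have g1 : j = b := by
        revert h1; unfold cl; split_ifs <;> simp_all
      have g2 : k = c := by
        revert h2; unfold cl; split_ifs <;> simp_all
      rw [g0, g1, g2]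
    · rw [sol_iff]
      have g0 : cl a b c a = 0 := by simp [cl]
      have g1 : cl a b c b = 1 := by simp [cl, hab.ne']
      have g2 : cl a b c c = 2 := by simp [cl, hbc.ne', (hab.trans hbc).ne']
      rw [g0, g1, g2]
      exact fun h => pw_not_comm (h rfl)
  · refine ⟨FreeMonoid.lift npimg, ?_, ?_⟩
    · rintro e ⟨i, j, k, l, -, -, rfl⟩
      simp [IsSolution, eqn, xv, yv, zv, tv, npimg]
    · rintro ⟨t, ht⟩
      obtain ⟨p, hp⟩ := ht (3, ⟨0, by omega⟩)
      obtain ⟨q, hq⟩ := ht (3, ⟨1, by omega⟩)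
      simp only [FreeMonoid.lift_eval_of, npimg] at hp hq
      norm_num at hp hq
      have hc : FreeMonoid.of (0 : Fin 2) * FreeMonoid.of 1 = FreeMonoid.of 1 * FreeMonoid.of 0 := by
        rw [hp, hq, ← pow_add, ← pow_add, add_comm]
      have := congrArg FreeMonoid.toList hc
      simp [FreeMonoid.toList_mul, FreeMonoid.toList_of] at this
end

section
/- With variables x, y, z, the pair of word equations xyz = zyx and xyyz = zyyx is an independent system, with solutions taken in the free monoid on two letters, and this system has a nonperiodic solution. Hence is'(3) ≥ 2. -/
/-- The equation `xyz = zyx`. -/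
def E1 : FreeMonoid (Fin 3) × FreeMonoid (Fin 3) := (x * y * z, z * y * x)
/-- The equation `xyyz = zyyx`. -/
def E2 : FreeMonoid (Fin 3) × FreeMonoid (Fin 3) := (x * y * y * z, z * y * y * x)

/-- The pair of word equations `xyz = zyx` and `xyyz = zyyx` is an independent system,
with solutions taken in the free monoid on two letters, and the system has a nonperiodic
solution. Hence is'(3) ≥ 2. -/
theorem pair_independent_with_nonperiodic_solution :
    (∃ h : FreeMonoid (Fin 3) →* FreeMonoid (Fin 2), IsSolution h E2 ∧ ¬ IsSolution h E1) ∧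
    (∃ h : FreeMonoid (Fin 3) →* FreeMonoid (Fin 2), IsSolution h E1 ∧ ¬ IsSolution h E2) ∧
    (∃ h : FreeMonoid (Fin 3) →* FreeMonoid (Fin 2),
      IsSolution h E1 ∧ IsSolution h E2 ∧ ¬ IsPeriodic h) := by
  have key : ∀ w : FreeMonoid (Fin 2), ∀ h : FreeMonoid (Fin 3) →* FreeMonoid (Fin 2),
      h = FreeMonoid.lift ![FreeMonoid.of 0, FreeMonoid.of 1, w] →
      h x = FreeMonoid.of 0 ∧ h y = FreeMonoid.of 1 ∧ h z = w := by
    intro w h hh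
    subst hh
    simp [x, y, z]
  refine ⟨⟨FreeMonoid.lift ![FreeMonoid.of 0, FreeMonoid.of 1, FreeMonoid.ofList [0, 1, 1, 0]], ?_⟩,
    ⟨FreeMonoid.lift ![FreeMonoid.of 0, FreeMonoid.of 1, FreeMonoid.ofList [0, 1, 0]], ?_⟩,
    ⟨FreeMonoid.lift ![FreeMonoid.of 0, FreeMonoid.of 1, FreeMonoid.of 0], ?_⟩⟩
  · obtain ⟨hx, hy, hz⟩ := key (FreeMonoid.ofList [0, 1, 1, 0]) _ rfl
    simp only [IsSolution, E1, E2, map_mul, hx, hy, hz]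
    refine ⟨rfl, fun h => ?_⟩
    have h' : ([0, 1, 0, 1, 1, 0] : List (Fin 2)) = [0, 1, 1, 0, 1, 0] := h
    revert h'
    decide
  · obtain ⟨hx, hy, hz⟩ := key (FreeMonoid.ofList [0, 1, 0]) _ rfl
    simp only [IsSolution, E1, E2, map_mul, hx, hy, hz]
    refine ⟨rfl, fun h => ?_⟩
    have h' : ([0, 1, 1, 0, 1, 0] : List (Fin 2)) = [0, 1, 0, 1, 1, 0] := h
    revert h'
    decide
  · obtain ⟨hx, hy, hz⟩ := key (FreeMonoid.of 0) _ rfl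
    simp only [IsSolution, E1, E2, map_mul, hx, hy, hz]
    refine ⟨trivial, trivial, ?_⟩
    rintro ⟨t, ht⟩
    obtain ⟨k, hk⟩ := ht 0
    obtain ⟨m, hm⟩ := ht 1
    have hk' : FreeMonoid.of (0 : Fin 2) = t ^ k := hx.symm.trans hk
    have hm' : FreeMonoid.of (1 : Fin 2) = t ^ m := hy.symm.trans hm
    have hc : FreeMonoid.of (0 : Fin 2) * FreeMonoid.of 1
        = FreeMonoid.of 1 * FreeMonoid.of 0 := by
      rw [hk', hm', ← pow_add, ← pow_add, add_comm]
    have h' : ([0, 1] : List (Fin 2)) = [1, 0] := hc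
    revert h'
    decide
end
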